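/- For all x > 0, the double inequality (x + 1/2)·(x² + x + 23/21)/(x⁴ + 2x³ + (17/7)x² + (10/7)x + 12/35) < ψ'(x+1) < (x + 1/2)·(x² + x + π²/(15(π²−9)))/(x⁴ + 2x³ + ((7π²−60)/(5(π²−9)))x² + ((2π²−15)/(5(π²−9)))x + 1/(5(π²−9))) holds. -/

import Mathlib

open Real Filter Set

/-- The digamma function ψ(x) = Γ'(x)/Γ(x), as the derivative of log ∘ Γ. -/
noncomputable def digamma (x : ℝ) : ℝ := deriv (fun y : ℝ => Real.log (Real.Gamma y)) x

/-- L(x,a) = (1/(90a²+2))·ln(x²+x+(3a+1)/3) + (45a²/(90a²+2))·ln(x²+x+(15a−1)/(45a)). -/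
noncomputable def L (x a : ℝ) : ℝ :=
  (1 / (90 * a ^ 2 + 2)) * Real.log (x ^ 2 + x + (3 * a + 1) / 3) +
    (45 * a ^ 2 / (90 * a ^ 2 + 2)) * Real.log (x ^ 2 + x + (15 * a - 1) / (45 * a))

open Topology

lemma aux_diff {y : ℝ} (hy : 0 < y) :
    DifferentiableAt ℝ (fun y : ℝ => Real.log (Real.Gamma y)) y := by
  refine (Real.differentiableAt_Gamma ?_).log (Real.Gamma_pos_of_pos hy).ne'
  intro m h
  have : (0:ℝ) ≤ m := Nat.cast_nonneg m
  linarith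

lemma aux_mono : MonotoneOn digamma (Ioi 0) :=
  ConvexOn.monotoneOn_deriv Real.convexOn_log_Gamma (fun _ hx => aux_diff hx)

lemma aux_step {y : ℝ} (hy : 0 < y) : digamma (y + 1) = digamma y + 1 / y := by
  unfold digamma
  rw [← deriv_comp_add_const (fun y : ℝ => Real.log (Real.Gamma y)) 1 y]
  have h : (fun x : ℝ => Real.log (Real.Gamma (x + 1))) =ᶠ[𝓝 y]
      fun x => Real.log (Real.Gamma x) + Real.log x := by
    filter_upwards [lt_mem_nhds hy] with x hx
    rw [Real.Gamma_add_one hx.ne', Real.log_mul hx.ne' (Real.Gamma_pos_of_pos hx).ne', add_comm]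
  rw [h.deriv_eq, deriv_fun_add (aux_diff hy) (Real.differentiableAt_log hy.ne'), Real.deriv_log,
    one_div]

lemma aux_partial (x : ℝ) (hx : 0 ≤ x) (N : ℕ) :
    ∑ n ∈ Finset.range N, (1 / ((n:ℝ) + 1) - 1 / ((n:ℝ) + 1 + x)) =
      digamma (x + 1) - digamma 1 - (digamma (N + 1 + x) - digamma (N + 1)) := by
  induction N with
  | zero => simp [add_comm]
  | succ k ih =>
    have hk : (0:ℝ) ≤ k := Nat.cast_nonneg k
    rw [Finset.sum_range_succ, ih]
    have h1 := aux_step (y := (k:ℝ) + 1) (by positivity)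
    have h2 := aux_step (y := (k:ℝ) + 1 + x) (by positivity)
    push_cast
    rw [show (k:ℝ) + 1 + 1 + x = k + 1 + x + 1 by ring, h1, h2]
    ring

lemma aux_growth (N k : ℕ) : digamma (N + 1 + k) - digamma (N + 1) ≤ k / ((N:ℝ) + 1) := by
  induction k with
  | zero => simp
  | succ k ih =>
    have hN : (0:ℝ) ≤ N := Nat.cast_nonneg N
    have hk : (0:ℝ) ≤ k := Nat.cast_nonneg k
    have h2 := aux_step (y := (N:ℝ) + 1 + k) (by positivity)
    have h3 : 1 / ((N:ℝ) + 1 + k) ≤ 1 / ((N:ℝ) + 1) := by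
      apply one_div_le_one_div_of_le <;> linarith
    push_cast
    rw [show (N:ℝ) + 1 + (k + 1) = N + 1 + k + 1 by ring, h2, add_div]
    linarith

lemma aux_tendsto (x : ℝ) (hx : 0 ≤ x) :
    Tendsto (fun N : ℕ => ∑ n ∈ Finset.range N, (1 / ((n:ℝ) + 1) - 1 / ((n:ℝ) + 1 + x)))
      atTop (𝓝 (digamma (x + 1) - digamma 1)) := by
  simp_rw [aux_partial x hx]
  obtain ⟨k, hk⟩ := exists_nat_ge x
  have h : Tendsto (fun N : ℕ => digamma ((N:ℝ) + 1 + x) - digamma (N + 1)) atTop (𝓝 0) := by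
    refine squeeze_zero (g := fun N : ℕ => (k:ℝ) / ((N:ℝ) + 1)) ?_ ?_ ?_
    · intro N
      have hN : (0:ℝ) ≤ N := Nat.cast_nonneg N
      have := aux_mono (a := (N:ℝ) + 1) (b := (N:ℝ) + 1 + x) (by simp; positivity)
        (by simp; positivity) (by linarith)
      linarith
    · intro N
      have hN : (0:ℝ) ≤ N := Nat.cast_nonneg N
      have := aux_mono (a := (N:ℝ) + 1 + x) (b := (N:ℝ) + 1 + k) (by simp; positivity)
        (by simp; positivity) (by linarith)
      linarith [aux_growth N k]
    · have := (tendsto_one_div_add_atTop_nhds_zero_nat (𝕜 := ℝ)).const_mul (k:ℝ)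
      simpa [div_eq_mul_inv] using this
  simpa using h.const_sub (digamma (x + 1) - digamma 1)

lemma aux_hasSum (x : ℝ) (hx : 0 < x) :
    HasSum (fun n : ℕ => 1 / (x + n + 1) ^ 2) (deriv digamma (x + 1)) := by
  have hu : Summable (fun n : ℕ => 4 * (1 / ((n:ℝ) + 1) ^ 2)) := by
    have := (summable_nat_add_iff 1).2 (hasSum_zeta_two.summable)
    refine Summable.mul_left 4 ?_
    simpa using this
  have hg : ∀ (n : ℕ) (y : ℝ), y ∈ Ioi (-1/2 : ℝ) →
      HasDerivAt (fun y : ℝ => 1 / ((n:ℝ) + 1) - 1 / ((n:ℝ) + 1 + y)) (1 / (y + n + 1) ^ 2) y := by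
    intro n y hy
    have hn : (0:ℝ) ≤ n := Nat.cast_nonneg n
    have hy' : -1/2 < y := hy
    have h0 : (n:ℝ) + 1 + y ≠ 0 := by
      have : 0 < (n:ℝ) + 1 + y := by linarith
      exact this.ne'
    have h1 := (((hasDerivAt_id y).const_add ((n:ℝ) + 1)).inv h0).const_sub (1 / ((n:ℝ) + 1))
    simp only [id] at h1
    convert! h1 using 1
    · ext z; simp
    · rw [show y + n + 1 = (n:ℝ) + 1 + y by ring]; ring
  have hg' : ∀ (n : ℕ) (y : ℝ), y ∈ Ioi (-1/2 : ℝ) →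
      ‖1 / (y + n + 1) ^ 2‖ ≤ 4 * (1 / ((n:ℝ) + 1) ^ 2) := by
    intro n y hy
    have hn : (0:ℝ) ≤ n := Nat.cast_nonneg n
    have hy' : -1/2 < y := hy
    have hp : 0 < y + n + 1 := by linarith
    rw [Real.norm_of_nonneg (by positivity), mul_one_div, div_le_div_iff₀ (by positivity)
      (by positivity)]
    nlinarith
  have h0 : (0:ℝ) ∈ Ioi (-1/2 : ℝ) := by norm_num
  have hs0 : Summable (fun n : ℕ => 1 / ((n:ℝ) + 1) - 1 / ((n:ℝ) + 1 + 0)) := by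
    simp [summable_zero]
  have hxm : x ∈ Ioi (-1/2 : ℝ) := by simp; linarith
  have hsum : Summable (fun n : ℕ => 1 / (x + n + 1) ^ 2) :=
    Summable.of_norm_bounded hu (fun n => hg' n x hxm)
  have hd := hasDerivAt_tsum_of_isPreconnected hu isOpen_Ioi isPreconnected_Ioi hg hg' h0 hs0 hxm
  have heq : (fun y => digamma (y + 1)) =ᶠ[𝓝 x]
      fun z => (∑' n : ℕ, (1 / ((n:ℝ) + 1) - 1 / ((n:ℝ) + 1 + z))) + digamma 1 := by
    filter_upwards [lt_mem_nhds hx] with z hz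
    have hzm : z ∈ Ioi (-1/2 : ℝ) := by simp; linarith
    have hS := summable_of_summable_hasDerivAt_of_isPreconnected hu isOpen_Ioi isPreconnected_Ioi
      hg hg' h0 hs0 hzm
    have := tendsto_nhds_unique hS.hasSum.tendsto_sum_nat (aux_tendsto z hz.le)
    rw [this]; ring
  have h2 : deriv digamma (x + 1) = ∑' n : ℕ, 1 / (x + n + 1) ^ 2 := by
    rw [← deriv_comp_add_const digamma 1 x, heq.deriv_eq]
    exact (hd.add_const _).deriv
  rw [h2]
  exact hsum.hasSum

lemma aux_tele {a G : ℕ → ℝ} {A : ℝ} (ha : HasSum a A) (hG : Tendsto G atTop (𝓝 0))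
    (h : ∀ n, G n - G (n + 1) < a n) : G 0 < A := by
  have h1 : ∀ N : ℕ, (a 0 - (G 0 - G 1)) + (G 0 - G (N + 1)) ≤ ∑ n ∈ Finset.range (N + 1), a n := by
    intro N
    induction N with
    | zero => simp
    | succ k ih =>
      rw [Finset.sum_range_succ]
      linarith [h (k + 1)]
  have h2 := (hG.comp (tendsto_add_atTop_nat 1)).const_sub (G 0) |>.const_add (a 0 - (G 0 - G 1))
  have h3 := ha.tendsto_sum_nat.comp (tendsto_add_atTop_nat 1)
  have := le_of_tendsto_of_tendsto' h2 h3 (fun N => h1 N)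
  linarith [h 0]

/-- The one-parameter family of rational approximations. -/
noncomputable def FF (s x : ℝ) : ℝ :=
  (x + 1 / 2) * (x ^ 2 + x + (1 / 3 + s)) /
    ((x ^ 2 + x) ^ 2 + (2 / 3 + s) * (x ^ 2 + x) + (4 / 45 + s / 3))

lemma FF_den_pos {s x : ℝ} (hs : 0 < s) (hx : 0 ≤ x) :
    0 < (x ^ 2 + x) ^ 2 + (2 / 3 + s) * (x ^ 2 + x) + (4 / 45 + s / 3) := by positivity

lemma FF_tendsto {s : ℝ} (hs : 0 < s) (x : ℝ) (hx : 0 < x) :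
    Tendsto (fun n : ℕ => FF s (x + n)) atTop (𝓝 0) := by
  have key : ∀ y : ℝ, 0 < y → FF s y ≤ 1 / y := by
    intro y hy
    unfold FF
    rw [div_le_div_iff₀ (FF_den_pos hs hy.le) hy]
    have : 0 < s * y := by positivity
    have : 0 < s * y ^ 2 := by positivity
    have : 0 < y ^ 3 := by positivity
    have : 0 < y ^ 2 := by positivity
    nlinarith
  have hinf : Tendsto (fun n : ℕ => x + (n:ℝ)) atTop atTop :=
    tendsto_atTop_add_const_left _ _ tendsto_natCast_atTop_atTop
  refine squeeze_zero (g := fun n : ℕ => 1 / (x + n)) ?_ ?_ ?_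
  · intro n
    have : 0 < x + (n:ℝ) := by positivity
    unfold FF
    positivity
  · intro n
    exact key _ (by positivity)
  · simpa [Function.comp_def] using tendsto_inv_atTop_zero.comp hinf

lemma FF_lower_step (x : ℝ) (hx : 0 < x) :
    FF (16/21) x - FF (16/21) (x + 1) < 1 / (x + 1) ^ 2 := by
  have h1 := FF_den_pos (s := 16/21) (by norm_num) hx.le
  have h2 := FF_den_pos (s := 16/21) (x := x + 1) (by norm_num) (by linarith)
  rw [← sub_pos]
  have : 1 / (x + 1) ^ 2 - (FF (16/21) x - FF (16/21) (x + 1)) = (144/1225) /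
    ((x + 1) ^ 2 * ((x ^ 2 + x) ^ 2 + (2 / 3 + 16/21) * (x ^ 2 + x) + (4 / 45 + (16/21) / 3)) *
     (((x+1) ^ 2 + (x+1)) ^ 2 + (2 / 3 + 16/21) * ((x+1) ^ 2 + (x+1)) + (4 / 45 + (16/21) / 3))) := by
    unfold FF
    have h3 : x + 1 ≠ 0 := by positivity
    rw [div_sub_div _ _ h1.ne' h2.ne', div_sub_div _ _ (by positivity) (by positivity),
      div_eq_div_iff (by positivity) (by positivity)]
    ring
  rw [this]
  positivity

lemma FF_upper_step (x : ℝ) (hx : 1/40 ≤ x) :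
    1 / (x + 1) ^ 2 < FF (43/100) x - FF (43/100) (x + 1) := by
  have hx0 : 0 < x := by linarith
  have h1 := FF_den_pos (s := 43/100) (by norm_num) hx0.le
  have h2 := FF_den_pos (s := 43/100) (x := x + 1) (by norm_num) (by linarith)
  rw [← sub_pos]
  have : (FF (43/100) x - FF (43/100) (x + 1)) - 1 / (x + 1) ^ 2 =
    (697/13500 * x^2 + 697/6750 * x - 1861/810000) /
    ((x + 1) ^ 2 * ((x ^ 2 + x) ^ 2 + (2 / 3 + 43/100) * (x ^ 2 + x) + (4 / 45 + (43/100) / 3)) *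
     (((x+1) ^ 2 + (x+1)) ^ 2 + (2 / 3 + 43/100) * ((x+1) ^ 2 + (x+1)) + (4 / 45 + (43/100) / 3))) := by
    unfold FF
    have h3 : x + 1 ≠ 0 := by positivity
    rw [div_sub_div _ _ h1.ne' h2.ne', div_sub_div _ _ (by positivity) (by positivity),
      div_eq_div_iff (by positivity) (by positivity)]
    ring
  rw [this]
  have : 0 < 697/13500 * x^2 + 697/6750 * x - 1861/810000 := by nlinarith
  positivity

lemma FF_anti {s t x : ℝ} (hs : 0 < s) (hst : s ≤ t) (hx : 0 < x) : FF t x ≤ FF s x := by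
  unfold FF
  rw [div_le_div_iff₀ (FF_den_pos (by linarith) hx.le) (FF_den_pos hs hx.le), ← sub_nonneg]
  have : (x + 1 / 2) * (x ^ 2 + x + (1 / 3 + s)) *
      ((x ^ 2 + x) ^ 2 + (2 / 3 + t) * (x ^ 2 + x) + (4 / 45 + t / 3)) -
      (x + 1 / 2) * (x ^ 2 + x + (1 / 3 + t)) *
      ((x ^ 2 + x) ^ 2 + (2 / 3 + s) * (x ^ 2 + x) + (4 / 45 + s / 3)) =
      (x + 1 / 2) * (t - s) / 45 := by ring
  rw [this]
  have : 0 ≤ t - s := by linarith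
  positivity

lemma FF_small {s x : ℝ} (hs1 : 0.423 ≤ s) (hs2 : s ≤ 0.424) (hx : 0 < x) (hx2 : x ≤ 1/40) :
    FF s 0 - x * (237/100 - 326/100 * x) < FF s x := by
  have hs : 0 < s := by linarith
  have h1 := FF_den_pos hs hx.le
  have h2 := FF_den_pos hs (le_refl (0:ℝ))
  rw [← sub_pos]
  have : FF s x - (FF s 0 - x * (237/100 - 326/100 * x)) =
     x * ((-103/5625 + 8/1125*s + 29/300*s^2) + (-3013/101250 + 149/3375*s - 13/180*s^2) * x
       + (-292/3375 - 691/4500*s - 89/300*s^2) * x^2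
       + (-1541/6750 - 2297/2250*s - 163/150*s^2) * x^3
       - (83/225 + 83/60*s) * x^4 - (326/1125 + 163/150*s) * x^5) /
    (((x ^ 2 + x) ^ 2 + (2 / 3 + s) * (x ^ 2 + x) + (4 / 45 + s / 3)) * (4/45 + s/3)) := by
    unfold FF
    simp only [ne_eq, OfNat.ofNat_ne_zero, not_false_eq_true, zero_pow, add_zero, mul_zero, zero_add]
    have h3 : 4/45 + s/3 ≠ 0 := by positivity
    rw [sub_sub_eq_add_sub, div_add' _ _ _ h1.ne', div_sub_div _ _ h1.ne' h3,
      div_eq_div_iff (by positivity) (by positivity)]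
    ring
  rw [this]
  have hss : 0.1789 ≤ s^2 := by nlinarith
  have hss2 : s^2 ≤ 0.18 := by nlinarith
  have e0 : 0.0019 ≤ -103/5625 + 8/1125*s + 29/300*s^2 := by linarith
  have e1 : -0.03 ≤ -3013/101250 + 149/3375*s - 13/180*s^2 := by linarith
  have e2 : -0.3 ≤ -292/3375 - 691/4500*s - 89/300*s^2 := by linarith
  have e3 : -1 ≤ -1541/6750 - 2297/2250*s - 163/150*s^2 := by linarith
  have e4 : 83/225 + 83/60*s ≤ 1 := by linarith
  have e5 : 326/1125 + 163/150*s ≤ 1 := by linarith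
  have p2 : x^2 ≤ 1/1600 := by nlinarith
  have p3 : x^3 ≤ 1/64000 := by
    have := pow_le_pow_left₀ hx.le hx2 3
    norm_num at this ⊢; exact this
  have p4 : x^4 ≤ 1/64000 := by
    have := pow_le_pow_left₀ hx.le hx2 4
    norm_num at this ⊢; linarith
  have p5 : x^5 ≤ 1/64000 := by
    have := pow_le_pow_left₀ hx.le hx2 5
    norm_num at this ⊢; linarith
  have q1 := mul_le_mul_of_nonneg_right e1 hx.le
  have q2 := mul_le_mul_of_nonneg_right e2 (pow_nonneg hx.le 2)
  have q3 := mul_le_mul_of_nonneg_right e3 (pow_nonneg hx.le 3)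
  have q4 := mul_le_mul_of_nonneg_right e4 (pow_nonneg hx.le 4)
  have q5 := mul_le_mul_of_nonneg_right e5 (pow_nonneg hx.le 5)
  refine div_pos (mul_pos hx ?_) (by positivity)
  linarith

lemma aux_term (n x : ℝ) (hn : 0 < n) (hx : 0 < x) :
    x * (2 / n ^ 3 - 3 * x / n ^ 4) ≤ 1 / n ^ 2 - 1 / (x + n) ^ 2 := by
  have : 1 / n ^ 2 - 1 / (x + n) ^ 2 - x * (2 / n ^ 3 - 3 * x / n ^ 4) =
      x ^ 3 * (4 * n + 3 * x) / (n ^ 4 * (x + n) ^ 2) := by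
    have : x + n ≠ 0 := by positivity
    field_simp
    ring
  have h : 0 ≤ x ^ 3 * (4 * n + 3 * x) / (n ^ 4 * (x + n) ^ 2) := by positivity
  linarith

lemma aux_small (x : ℝ) (hx : 0 < x) :
    deriv digamma (x + 1) ≤ π ^ 2 / 6 - x * (237/100 - 326/100 * x) := by
  have hz : HasSum (fun n : ℕ => 1 / ((n:ℝ) + 1) ^ 2) (π ^ 2 / 6) := by
    have := (hasSum_nat_add_iff' 1).2 hasSum_zeta_two
    simpa using this
  have hd := hz.sub (aux_hasSum x hx)
  have hle := sum_le_hasSum (Finset.range 6) (fun n _ => by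
    have hn : (0:ℝ) ≤ n := Nat.cast_nonneg n
    rw [sub_nonneg]
    apply one_div_le_one_div_of_le (by positivity)
    apply pow_le_pow_left₀ (by positivity)
    linarith) hd
  have h6 : x * (237/100 - 326/100 * x) ≤
      ∑ n ∈ Finset.range 6, (1 / ((n:ℝ) + 1) ^ 2 - 1 / (x + n + 1) ^ 2) := by
    have : ∑ n ∈ Finset.range 6, x * (2 / ((n:ℝ) + 1) ^ 3 - 3 * x / ((n:ℝ) + 1) ^ 4) ≤
        ∑ n ∈ Finset.range 6, (1 / ((n:ℝ) + 1) ^ 2 - 1 / (x + n + 1) ^ 2) := by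
      apply Finset.sum_le_sum
      intro n _
      have := aux_term ((n:ℝ) + 1) x (by positivity) hx
      rwa [← add_assoc] at this
    refine le_trans ?_ this
    simp only [Finset.sum_range_succ, Finset.sum_range_zero]
    norm_num
    nlinarith [sq_nonneg x]
  linarith

lemma pi_sq_bounds : 9.8696 < π ^ 2 ∧ π ^ 2 < 9.86961 := by
  have h1 := Real.pi_gt_d6
  have h2 := Real.pi_lt_d6
  constructor <;> nlinarith

/-- For x > 0, the sharp double inequality for the trigamma function ψ'(x+1). -/
theorem stmt_10 (x : ℝ) (hx : 0 < x) :
    (x + 1 / 2) * (x ^ 2 + x + 23 / 21) /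
        (x ^ 4 + 2 * x ^ 3 + (17 / 7) * x ^ 2 + (10 / 7) * x + 12 / 35) <
      deriv digamma (x + 1) ∧
    deriv digamma (x + 1) <
      (x + 1 / 2) * (x ^ 2 + x + π ^ 2 / (15 * (π ^ 2 - 9))) /
        (x ^ 4 + 2 * x ^ 3 + ((7 * π ^ 2 - 60) / (5 * (π ^ 2 - 9))) * x ^ 2 +
          ((2 * π ^ 2 - 15) / (5 * (π ^ 2 - 9))) * x + 1 / (5 * (π ^ 2 - 9))) := by
  have hD := aux_hasSum x hx
  constructor
  · have h := aux_tele hD (FF_tendsto (s := 16/21) (by norm_num) x hx) (fun n => by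
      have := FF_lower_step (x + n) (by positivity)
      push_cast
      rwa [← add_assoc])
    refine lt_of_eq_of_lt ?_ h
    simp only [FF, Nat.cast_zero, add_zero]
    congr 1 <;> ring
  · obtain ⟨hp1, hp2⟩ := pi_sq_bounds
    generalize hP : π ^ 2 = P at hp1 hp2
    have hq : 0 < P - 9 := by linarith
    obtain ⟨s, hs⟩ : ∃ s, s = (45 - 4 * P) / (15 * (P - 9)) := ⟨_, rfl⟩
    have hs1 : 0.423 ≤ s := by
      rw [hs, le_div_iff₀ (by positivity)]; linarith
    have hs2 : s ≤ 0.424 := by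
      rw [hs, div_le_iff₀ (by positivity)]; linarith
    have hs0 : 0 < s := by linarith
    have e1 : P / (15 * (P - 9)) = 1 / 3 + s := by
      rw [hs]; field_simp; ring
    have e2 : (7 * P - 60) / (5 * (P - 9)) = 1 + (2 / 3 + s) := by
      rw [hs]; field_simp; ring
    have e3 : (2 * P - 15) / (5 * (P - 9)) = 2 / 3 + s := by
      rw [hs]; field_simp; ring
    have e4 : 1 / (5 * (P - 9)) = 4 / 45 + s / 3 := by
      rw [hs]; field_simp; ring
    rw [e1, e2, e3, e4]
    have hU : (x + 1 / 2) * (x ^ 2 + x + (1 / 3 + s)) /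
        (x ^ 4 + 2 * x ^ 3 + (1 + (2 / 3 + s)) * x ^ 2 + (2 / 3 + s) * x + (4 / 45 + s / 3)) =
        FF s x := by
      unfold FF; congr 1; ring
    rw [hU]
    rcases le_total x (1/40) with hx2 | hx2
    · have h1 := aux_small x hx
      have h2 := FF_small hs1 hs2 hx hx2
      have h3 : FF s 0 = P / 6 := by
        have h5 : 4 / 45 + s / 3 ≠ 0 := by positivity
        have h6 : P / 6 = (P / (15 * (P - 9))) / 2 / (1 / (5 * (P - 9))) := by
          field_simp; norm_num
        rw [h6, e1, e4]
        unfold FF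
        congr 1 <;> ring
      rw [hP] at h1
      linarith
    · have h := aux_tele hD.neg (by
          simpa using (FF_tendsto (s := 43/100) (by norm_num) x hx).neg :
          Tendsto (fun n : ℕ => - FF (43/100) (x + n)) atTop (𝓝 0)) (fun n => by
        have hn : (0:ℝ) ≤ n := Nat.cast_nonneg n
        have := FF_upper_step (x + n) (by linarith)
        push_cast
        rw [← add_assoc]
        linarith)
      have h4 := FF_anti hs0 (by linarith : s ≤ 43/100) hx
      simp only [Nat.cast_zero, add_zero] at h
      linarith
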